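/- arXiv:1012.1103 — 2 statements merged into one kernel-verified Lean document; each statement's English description precedes it below -/
import Mathlib

section
/- Let (X,T) be a topological dynamical system, Z ⊆ X, and s, ε > 0. Assume P^s_ε(Z) = ∞. Then for every finite interval (a,b) ⊂ ℝ with a ≥ 0 and every N ∈ ℕ, there exists a finite pairwise disjoint collection of closed Bowen balls {B̄_{n_i}(x_i,ε)} with x_i ∈ Z and n_i ≥ N such that Σ_i e^{−n_i s} ∈ (a,b). -/
/-!
Fix `N' ≥ N` so large that a single ball of order at least `N'` has weight `e^{-n s} < b - a`.
Since `P^s_{N',ε}(Z) = ∞`, some disjoint family has total weight exceeding `a`, hence so does a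
finite subfamily. Discarding balls one at a time lowers the sum by steps shorter than the length
of `(a, b)`, so the sum cannot jump over the interval: this is `exists_subset_sum_mem_Ioo`.
-/

open Filter Set MeasureTheory Topology
open scoped ENNReal NNReal

section Core

variable {X : Type*} [MetricSpace X]

/-- The open Bowen ball `B_n(x, ε)` = `{y : d_n(x,y) < ε}` where
`d_n(x,y) = max_{0 ≤ k ≤ n-1} d(T^k x, T^k y)` is the `n`-th Bowen metric. -/
def bowenBall (T : X → X) (x : X) (n : ℕ) (ε : ℝ) : Set X :=
  {y | ∀ k < n, dist (T^[k] x) (T^[k] y) < ε}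

/-- The closed Bowen ball `B̄_n(x, ε)` = `{y : d_n(x,y) ≤ ε}`. -/
def bowenClosedBall (T : X → X) (x : X) (n : ℕ) (ε : ℝ) : Set X :=
  {y | ∀ k < n, dist (T^[k] x) (T^[k] y) ≤ ε}

/-- `M^s_{N,ε}(Z)`: infimum of `Σ_i exp (- s n_i)` over finite or countable families
of open Bowen balls `{B_{n_i}(x_i, ε)}` with `n_i ≥ N` covering `Z`. -/
noncomputable def Mpre (T : X → X) (s : ℝ) (N : ℕ) (ε : ℝ) (Z : Set X) : ℝ≥0∞ :=
  ⨅ (I : Set ℕ) (x : ℕ → X) (n : ℕ → ℕ) (_ : ∀ i ∈ I, N ≤ n i)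
    (_ : Z ⊆ ⋃ i ∈ I, bowenBall T (x i) (n i) ε),
    ∑' i : I, ENNReal.ofReal (Real.exp (-s * n i))

/-- `M^s_ε(Z) = lim_{N → ∞} M^s_{N,ε}(Z)` (the quantity is nondecreasing in `N`). -/
noncomputable def MpreEps (T : X → X) (s : ℝ) (ε : ℝ) (Z : Set X) : ℝ≥0∞ :=
  ⨆ N : ℕ, Mpre T s N ε Z

/-- `M^s(Z) = lim_{ε → 0} M^s_ε(Z)` (the quantity is nondecreasing as `ε` decreases). -/
noncomputable def Mtop (T : X → X) (s : ℝ) (Z : Set X) : ℝ≥0∞ :=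
  ⨆ (ε : ℝ) (_ : 0 < ε), MpreEps T s ε Z

/-- Bowen's topological entropy `h^B_top(T,Z)`: the critical value of `s` at which
`M^s(Z)` jumps from `∞` to `0`. -/
noncomputable def bowenEntropy (T : X → X) (Z : Set X) : ℝ≥0∞ :=
  ⨆ (s : ℝ) (_ : Mtop T s Z = ∞), ENNReal.ofReal s

/-- `P^s_{N,ε}(Z)`: suprema of `Σ_i exp (- s n_i)` over finite or countable pairwise
disjoint families of closed Bowen balls `{B̄_{n_i}(x_i, ε)}` with `x_i ∈ Z`, `n_i ≥ N`. -/
noncomputable def Ppre (T : X → X) (s : ℝ) (N : ℕ) (ε : ℝ) (Z : Set X) : ℝ≥0∞ :=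
  ⨆ (I : Set ℕ) (x : ℕ → X) (n : ℕ → ℕ) (_ : ∀ i ∈ I, x i ∈ Z ∧ N ≤ n i)
    (_ : ∀ i ∈ I, ∀ j ∈ I, i ≠ j →
      Disjoint (bowenClosedBall T (x i) (n i) ε) (bowenClosedBall T (x j) (n j) ε)),
    ∑' i : I, ENNReal.ofReal (Real.exp (-s * n i))

/-- `P^s_ε(Z) = lim_{N → ∞} P^s_{N,ε}(Z)` (the quantity is nonincreasing in `N`). -/
noncomputable def PpreEps (T : X → X) (s : ℝ) (ε : ℝ) (Z : Set X) : ℝ≥0∞ :=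
  ⨅ N : ℕ, Ppre T s N ε Z

/-- `𝒫^s_ε(Z) = inf { Σ_{i} P^s_ε(Z_i) : ⋃_i Z_i ⊇ Z }`. -/
noncomputable def Pouter (T : X → X) (s : ℝ) (ε : ℝ) (Z : Set X) : ℝ≥0∞ :=
  ⨅ (Zs : ℕ → Set X) (_ : Z ⊆ ⋃ i, Zs i), ∑' i, PpreEps T s ε (Zs i)

/-- `h^P_top(T,Z,ε)`: the critical value of `s` at which `𝒫^s_ε(Z)` jumps from `∞` to `0`. -/
noncomputable def packEntropyEps (T : X → X) (ε : ℝ) (Z : Set X) : ℝ≥0∞ :=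
  ⨆ (s : ℝ) (_ : Pouter T s ε Z = ∞), ENNReal.ofReal s

/-- The packing topological entropy `h^P_top(T,Z) = lim_{ε → 0} h^P_top(T,Z,ε)`
(the quantity is nondecreasing as `ε` decreases). -/
noncomputable def packEntropy (T : X → X) (Z : Set X) : ℝ≥0∞ :=
  ⨆ (ε : ℝ) (_ : 0 < ε), packEntropyEps T ε Z

/-- `r_n(Z,ε)`: the largest cardinality of an `(n,ε)`-separated subset of `Z`,
i.e. a set in which distinct points `x, y` satisfy `d_n(x,y) > ε`. -/
noncomputable def maxSep (T : X → X) (Z : Set X) (n : ℕ) (ε : ℝ) : ℝ≥0∞ :=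
  ⨆ (E : Finset X) (_ : ↑E ⊆ Z ∧
    ∀ x ∈ E, ∀ y ∈ E, x ≠ y → ∃ k < n, ε < dist (T^[k] x) (T^[k] y)),
    (E.card : ℝ≥0∞)

/-- Logarithm on `ℝ≥0∞` (with `elog ∞ = ∞`), used for counting quantities. -/
noncomputable def elog (x : ℝ≥0∞) : ℝ≥0∞ :=
  if x = ∞ then ∞ else ENNReal.ofReal (Real.log x.toReal)

/-- The upper capacity topological entropy
`h^{UC}_top(T,Z) = lim_{ε → 0} limsup_{n → ∞} (1/n) log r_n(Z,ε)`. -/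
noncomputable def upcapEntropy (T : X → X) (Z : Set X) : ℝ≥0∞ :=
  ⨆ (ε : ℝ) (_ : 0 < ε), Filter.limsup (fun n : ℕ => elog (maxSep T Z n ε) / n) Filter.atTop

/-- `- log x` as a function `ℝ≥0∞ → ℝ≥0∞` (with `negLog 0 = ∞`), used for measures of balls. -/
noncomputable def negLog (x : ℝ≥0∞) : ℝ≥0∞ :=
  if x = 0 then ∞ else ENNReal.ofReal (-Real.log x.toReal)

variable [MeasurableSpace X]

/-- The lower local entropy `h̲_μ(T,x) = lim_{ε→0} liminf_{n→∞} -(1/n) log μ(B_n(x,ε))`. -/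
noncomputable def lowerLocalEntropy (T : X → X) (μ : Measure X) (x : X) : ℝ≥0∞ :=
  ⨆ (ε : ℝ) (_ : 0 < ε),
    Filter.liminf (fun n : ℕ => negLog (μ (bowenBall T x n ε)) / n) Filter.atTop

/-- The upper local entropy `h̄_μ(T,x) = lim_{ε→0} limsup_{n→∞} -(1/n) log μ(B_n(x,ε))`. -/
noncomputable def upperLocalEntropy (T : X → X) (μ : Measure X) (x : X) : ℝ≥0∞ :=
  ⨆ (ε : ℝ) (_ : 0 < ε),
    Filter.limsup (fun n : ℕ => negLog (μ (bowenBall T x n ε)) / n) Filter.atTop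

/-- The measure-theoretical lower entropy `h̲_μ(T) = ∫ h̲_μ(T,x) dμ(x)`. -/
noncomputable def lowerEntropy (T : X → X) (μ : Measure X) : ℝ≥0∞ :=
  ∫⁻ x, lowerLocalEntropy T μ x ∂μ

/-- The measure-theoretical upper entropy `h̄_μ(T) = ∫ h̄_μ(T,x) dμ(x)`. -/
noncomputable def upperEntropy (T : X → X) (μ : Measure X) : ℝ≥0∞ :=
  ∫⁻ x, upperLocalEntropy T μ x ∂μ

end Core

/-- A finite sum exceeding `a ≥ 0`, all of whose terms are smaller than `b - a`, has a
sub-sum in `(a, b)`. -/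
lemma exists_subset_sum_mem_Ioo {ι : Type*} [DecidableEq ι] (f : ι → ℝ) {a b : ℝ}
    (ha : 0 ≤ a) (F : Finset ι) (hf : ∀ i ∈ F, f i < b - a) (hF : a < ∑ i ∈ F, f i) :
    ∃ G ⊆ F, ∑ i ∈ G, f i ∈ Set.Ioo a b := by
  induction F using Finset.induction_on with
  | empty => simp at hF; linarith
  | insert i F hi ih =>
    by_cases hb : ∑ j ∈ insert i F, f j < b
    · exact ⟨_, subset_rfl, hF, hb⟩
    · rw [Finset.sum_insert hi] at hb
      have hfi := hf i (Finset.mem_insert_self i F)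
      obtain ⟨G, hG, hGs⟩ := ih (fun j hj => hf j (Finset.mem_insert_of_mem hj)) (by linarith)
      exact ⟨G, hG.trans (Finset.subset_insert i F), hGs⟩

/-- **Feng–Huang, Lemma 4.1**: let `Z ⊆ X` and `s, ε > 0` with `P^s_ε(Z) = ∞`.  Then for
every interval `(a,b) ⊆ ℝ` with `0 ≤ a < b` and every `N ∈ ℕ` there exists a finite
pairwise disjoint collection `{B̄_{n_i}(x_i, ε)}` of closed Bowen balls with `x_i ∈ Z`,
`n_i ≥ N` and `Σ_i e^{-n_i s} ∈ (a,b)`. -/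
theorem exists_finite_disjoint_packing_sum_mem_Ioo
    {X : Type*} [MetricSpace X] [CompactSpace X]
    (T : X → X) (hT : Continuous T) (Z : Set X)
    (s ε : ℝ) (hs : 0 < s) (hε : 0 < ε) (hP : PpreEps T s ε Z = ∞)
    (a b : ℝ) (ha : 0 ≤ a) (hab : a < b) (N : ℕ) :
    ∃ (I : Finset ℕ) (x : ℕ → X) (n : ℕ → ℕ),
      (∀ i ∈ I, x i ∈ Z ∧ N ≤ n i) ∧
      (∀ i ∈ I, ∀ j ∈ I, i ≠ j →
        Disjoint (bowenClosedBall T (x i) (n i) ε) (bowenClosedBall T (x j) (n j) ε)) ∧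
      (∑ i ∈ I, Real.exp (-(n i : ℝ) * s)) ∈ Set.Ioo a b := by
  classical
  have hlim : Tendsto (fun n : ℕ => Real.exp (-(n : ℝ) * s)) atTop (𝓝 0) := by
    refine Real.tendsto_exp_atBot.comp ?_
    simp only [neg_mul]
    exact tendsto_neg_atTop_atBot.comp (tendsto_natCast_atTop_atTop.atTop_mul_const hs)
  obtain ⟨N₀, hN₀⟩ := eventually_atTop.1 (hlim.eventually (gt_mem_nhds (sub_pos.2 hab)))
  have hPN : ENNReal.ofReal a < Ppre T s (max N N₀) ε Z := by
    rw [iInf_eq_top.1 hP (max N N₀)]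
    exact ENNReal.ofReal_lt_top
  simp only [Ppre, lt_iSup_iff] at hPN
  obtain ⟨I, x, n, hI, hdisj, hsum⟩ := hPN
  rw [ENNReal.tsum_eq_iSup_sum, lt_iSup_iff] at hsum
  obtain ⟨F, hF⟩ := hsum
  rw [← ENNReal.ofReal_sum_of_nonneg (fun _ _ => (Real.exp_pos _).le),
    ENNReal.ofReal_lt_ofReal_iff_of_nonneg ha] at hF
  obtain ⟨G, -, hGs⟩ := exists_subset_sum_mem_Ioo (b := b)
    (fun i : I => Real.exp (-(n i : ℝ) * s)) ha F
    (fun i _ => hN₀ _ ((le_max_right _ _).trans (hI i i.2).2))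
    (by simpa only [neg_mul, mul_comm s] using hF)
  have hGI : ∀ i ∈ G.map (Function.Embedding.subtype (· ∈ I)), i ∈ I := by
    simp only [Finset.mem_map]
    rintro _ ⟨i, -, rfl⟩
    exact i.2
  refine ⟨G.map (Function.Embedding.subtype (· ∈ I)), x, n, fun i hi => ?_, fun i hi j hj =>
    hdisj i (hGI i hi) j (hGI j hj), ?_⟩
  · exact ⟨(hI i (hGI i hi)).1, (le_max_left _ _).trans (hI i (hGI i hi)).2⟩
  · rw [Finset.sum_map]
    exact hGs
end

section
/- Let (X,T) be a topological dynamical system, let Z ⊆ X be a Borel set, and let μ be a Borel probability measure on X with μ(Z) = 1. Then the packing topological entropy of Z is at least the measure-theoretical upper entropy of μ: h^P_top(T,Z) ≥ h̄_μ(T). -/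
/-!
The proof is by contraposition. Suppose `packEntropy T Z < s < t`; it is enough to show that the
upper local entropy is at most `t` almost everywhere. Since `s` exceeds the packing entropy, for
each `ε > 0` the set `Z` is covered by countably many sets `E` with `P^s_{N,ε}(E) < ∞` for some
`N`. For `n ≥ N`, let `E_n` be the set of `x ∈ E` with `μ (B_n(x, 3ε)) ≤ exp (-t n)`. A maximal
disjoint family of closed Bowen balls `B̄_n(x_i, ε)` with `x_i ∈ E_n` is countable, and the
enlarged balls `B_n(x_i, 3ε)` cover `E_n`, so
`μ E_n ≤ ∑ exp (-t n) ≤ exp (-(t - s) n) * P^s_{N,ε}(E)` (`measure_small_le`). These bounds are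
summable, so by Borel–Cantelli almost no point of `E` lies in infinitely many `E_n`
(`measure_frequently_small`). Letting `ε` run through `1 / (3 (m + 1))` covers all points of `Z`
with upper local entropy larger than `t`. Only the outer measure is used, so measurability of the
local entropy plays no role.
-/

open Filter Set MeasureTheory Topology
open scoped ENNReal NNReal

section Aux

variable {X : Type*} [MetricSpace X]

lemma isOpen_bowenBall {T : X → X} (hT : Continuous T) (x : X) (n : ℕ) (ε : ℝ) :
    IsOpen (bowenBall T x n ε) := by
  have h : bowenBall T x n ε =
      ⋂ k ∈ Finset.range n, {y | dist (T^[k] x) (T^[k] y) < ε} := by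
    ext y; simp [bowenBall]
  rw [h]
  exact isOpen_biInter_finset fun k _ =>
    isOpen_lt (continuous_const.dist (hT.iterate k)) continuous_const

lemma bowenBall_mono (T : X → X) (x : X) (n : ℕ) {ε ε' : ℝ} (h : ε ≤ ε') :
    bowenBall T x n ε ⊆ bowenBall T x n ε' :=
  fun _ hy k hk => (hy k hk).trans_le h

/-- A maximal disjoint family of closed Bowen balls of order `n` centred in `F`, with indices in
`ℕ`; by maximality the enlarged balls cover `F`. -/
lemma exists_disjoint_cover [CompactSpace X] {T : X → X} (hT : Continuous T) [Nonempty X]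
    (F : Set X) (n : ℕ) {ε : ℝ} (hε : 0 < ε) :
    ∃ (I : Set ℕ) (x : ℕ → X), (∀ i ∈ I, x i ∈ F) ∧
      (∀ i ∈ I, ∀ j ∈ I, i ≠ j →
        Disjoint (bowenClosedBall T (x i) n ε) (bowenClosedBall T (x j) n ε)) ∧
      F ⊆ ⋃ i ∈ I, bowenBall T (x i) n (3 * ε) := by
  have hself : ∀ x : X, x ∈ bowenBall T x n ε := fun x k _ => by simpa using hε
  have hsub : ∀ x : X, bowenBall T x n ε ⊆ bowenClosedBall T x n ε :=
    fun x y hy k hk => (hy k hk).le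
  -- With all weights equal, Vitali's selection produces a maximal disjoint subfamily.
  obtain ⟨u, huF, hdisj, hcov⟩ := Vitali.exists_disjoint_subfamily_covering_enlargement
    (fun x : X => bowenClosedBall T x n ε) F (fun _ => 1) 2 (by norm_num)
    (fun _ _ => zero_le_one) 1 (fun _ _ => le_rfl) (fun x _ => ⟨x, hsub x (hself x)⟩)
  have hcount : u.Countable :=
    Set.PairwiseDisjoint.countable_of_isOpen (s := fun x => bowenBall T x n ε)
      (hdisj.mono hsub) (fun x _ => isOpen_bowenBall hT x n ε) (fun x _ => ⟨x, hself x⟩)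
  obtain ⟨f, hf⟩ := Set.countable_iff_exists_injOn.1 hcount
  have hinv : ∀ a ∈ u, Function.invFunOn f u (f a) = a :=
    fun a ha => hf.leftInvOn_invFunOn ha
  refine ⟨f '' u, Function.invFunOn f u, ?_, ?_, ?_⟩
  · rintro _ ⟨a, ha, rfl⟩
    rw [hinv a ha]; exact huF ha
  · rintro _ ⟨a, ha, rfl⟩ _ ⟨b, hb, rfl⟩ hab
    rw [hinv a ha, hinv b hb]
    exact hdisj ha hb fun h => hab (by rw [h])
  · intro y hy
    obtain ⟨b, hb, ⟨z, hzy, hzb⟩, -⟩ := hcov y hy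
    refine Set.mem_biUnion (Set.mem_image_of_mem f hb) ?_
    rw [hinv b hb]
    intro k hk
    have h1 := hzy k hk
    have h2 := hzb k hk
    have h3 := dist_triangle_right (T^[k] b) (T^[k] y) (T^[k] z)
    linarith

variable [MeasurableSpace X]

lemma measure_small_le [CompactSpace X] {T : X → X} (hT : Continuous T) [Nonempty X]
    (μ : Measure X) (E : Set X) {ε : ℝ} (hε : 0 < ε) (s t : ℝ) {N n : ℕ} (hn : N ≤ n) :
    μ {x | x ∈ E ∧ μ (bowenBall T x n (3 * ε)) ≤ ENNReal.ofReal (Real.exp (-t * n))} ≤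
      ENNReal.ofReal (Real.exp (-(t - s) * n)) * Ppre T s N ε E := by
  obtain ⟨I, x, hxF, hdisj, hcov⟩ := exists_disjoint_cover hT
    {x | x ∈ E ∧ μ (bowenBall T x n (3 * ε)) ≤ ENNReal.ofReal (Real.exp (-t * n))} n hε
  have hP : ∑' _ : I, ENNReal.ofReal (Real.exp (-s * n)) ≤ Ppre T s N ε E := by
    unfold Ppre
    exact le_iSup_of_le I <| le_iSup_of_le x <| le_iSup_of_le (fun _ => n) <|
      le_iSup_of_le (fun i hi => ⟨(hxF i hi).1, hn⟩) <| le_iSup_of_le hdisj le_rfl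
  calc _ ≤ μ (⋃ i ∈ I, bowenBall T (x i) n (3 * ε)) := measure_mono hcov
    _ ≤ ∑' i : I, μ (bowenBall T (x i) n (3 * ε)) := measure_biUnion_le μ I.to_countable _
    _ ≤ ∑' _ : I, ENNReal.ofReal (Real.exp (-t * n)) :=
        ENNReal.tsum_le_tsum fun i => (hxF i i.2).2
    _ = ∑' _ : I, ENNReal.ofReal (Real.exp (-(t - s) * n)) *
          ENNReal.ofReal (Real.exp (-s * n)) := by
        rw [← ENNReal.ofReal_mul (Real.exp_pos _).le, ← Real.exp_add]
        ring_nf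
    _ = ENNReal.ofReal (Real.exp (-(t - s) * n)) *
          ∑' _ : I, ENNReal.ofReal (Real.exp (-s * n)) := ENNReal.tsum_mul_left
    _ ≤ _ := by gcongr

lemma measure_frequently_small [CompactSpace X] {T : X → X} (hT : Continuous T) [Nonempty X]
    (μ : Measure X) (E : Set X) {ε : ℝ} (hε : 0 < ε) {s t : ℝ} (hst : s < t)
    (hE : PpreEps T s ε E ≠ ∞) :
    μ {x | x ∈ E ∧ ∃ᶠ n : ℕ in atTop,
      μ (bowenBall T x n (3 * ε)) ≤ ENNReal.ofReal (Real.exp (-t * n))} = 0 := by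
  obtain ⟨N, hN⟩ : ∃ N, Ppre T s N ε E < ∞ := iInf_lt_iff.1 (lt_top_iff_ne_top.2 hE)
  have hsum : ∑' n : ℕ, μ {x | N ≤ n ∧ x ∈ E ∧
      μ (bowenBall T x n (3 * ε)) ≤ ENNReal.ofReal (Real.exp (-t * n))} ≠ ∞ := by
    have hs : Summable fun n : ℕ => Real.exp (-(t - s) * n) := by
      have := Real.summable_exp_nat_mul_iff.2 (show -(t - s) < 0 by linarith)
      simpa only [mul_comm] using this
    have hfin : ∑' n : ℕ, ENNReal.ofReal (Real.exp (-(t - s) * n)) * Ppre T s N ε E ≠ ∞ := by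
      rw [ENNReal.tsum_mul_right]
      exact ENNReal.mul_ne_top hs.tsum_ofReal_ne_top hN.ne
    refine ne_top_of_le_ne_top hfin (ENNReal.tsum_le_tsum fun n => ?_)
    by_cases hn : N ≤ n
    · simpa [hn] using measure_small_le hT μ E hε s t hn
    · simp [hn]
  refine measure_mono_null ?_ (measure_setOfPred_frequently_eq_zero hsum)
  rintro x ⟨hxE, hx⟩
  exact (hx.and_eventually (eventually_ge_atTop N)).mono fun n h => ⟨h.2, hxE, h.1⟩

lemma le_exp_of_lt_negLog_div {m : ℝ≥0∞} (hm : m ≠ ∞) {t : ℝ≥0} {n : ℕ} (hn : 1 ≤ n)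
    (h : (t : ℝ≥0∞) < negLog m / n) : m ≤ ENNReal.ofReal (Real.exp (-(t : ℝ) * n)) := by
  by_cases h0 : m = 0
  · simp [h0]
  have hpos : 0 < m.toReal := ENNReal.toReal_pos h0 hm
  have hn0 : (n : ℝ≥0∞) ≠ 0 := by exact_mod_cast (by omega : n ≠ 0)
  rw [negLog, if_neg h0, ENNReal.lt_div_iff_mul_lt (.inl hn0) (.inl (ENNReal.natCast_ne_top n))]
    at h
  have h2 : ((t * n : ℝ≥0) : ℝ≥0∞) < ENNReal.ofReal (-Real.log m.toReal) := by
    simpa using h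
  rw [← ENNReal.ofReal_coe_nnreal] at h2
  have h3 := (ENNReal.ofReal_lt_ofReal_iff_of_nonneg (NNReal.coe_nonneg _)).1 h2
  push_cast at h3
  rw [← ENNReal.ofReal_toReal hm]
  refine ENNReal.ofReal_le_ofReal ?_
  rw [← Real.log_le_iff_le_exp hpos]
  linarith

end Aux

/-- **Feng–Huang, proof of Theorem 1.3, Part 1**: if `Z ⊆ X` is a Borel set and `μ` is a
Borel probability measure on `X` with `μ(Z) = 1`, then `h^P_top(T,Z) ≥ h̄_μ(T)`. -/
theorem upperEntropy_le_packEntropy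
    {X : Type*} [MetricSpace X] [CompactSpace X] [MeasurableSpace X] [BorelSpace X]
    (T : X → X) (hT : Continuous T) (Z : Set X) (hZ : MeasurableSet Z)
    (μ : Measure X) (hμ : IsProbabilityMeasure μ) (hμZ : μ Z = 1) :
    upperEntropy T μ ≤ packEntropy T Z := by
  by_contra! hlt
  obtain ⟨s, hs, hs'⟩ := ENNReal.lt_iff_exists_nnreal_btwn.1 hlt
  obtain ⟨t, hst, ht⟩ := ENNReal.lt_iff_exists_nnreal_btwn.1 hs'
  have hst' : (s : ℝ) < t := by exact_mod_cast hst
  have : Nonempty X := nonempty_of_isProbabilityMeasure μ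
  -- The critical value at scale `ε` is below `s`, so `𝒫^s_ε(Z)` is finite.
  have hfin : ∀ ε : ℝ, 0 < ε → Pouter T s ε Z ≠ ∞ := by
    intro ε hε htop
    refine hs.not_ge ?_
    rw [← ENNReal.ofReal_coe_nnreal]
    exact le_iSup₂_of_le ε hε (le_iSup₂_of_le (s : ℝ) htop le_rfl)
  have hnull : ∀ m : ℕ, μ {x | x ∈ Z ∧ ∃ᶠ n : ℕ in atTop,
      μ (bowenBall T x n (1 / ((m : ℝ) + 1))) ≤ ENNReal.ofReal (Real.exp (-(t : ℝ) * n))} = 0 := by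
    intro m
    have hε : (0 : ℝ) < 1 / ((m : ℝ) + 1) / 3 := by positivity
    obtain ⟨Zs, hZs⟩ := iInf_lt_iff.1 (lt_top_iff_ne_top.2 (hfin _ hε))
    obtain ⟨hcov, hsum⟩ := iInf_lt_iff.1 hZs
    refine measure_mono_null ?_ (measure_iUnion_null fun i =>
      measure_frequently_small hT μ (Zs i) hε hst' (ENNReal.ne_top_of_tsum_ne_top hsum.ne i))
    rintro x ⟨hxZ, hx⟩
    obtain ⟨i, hi⟩ := Set.mem_iUnion.1 (hcov hxZ)
    refine Set.mem_iUnion.2 ⟨i, hi, ?_⟩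
    rwa [mul_div_cancel₀ _ (three_ne_zero)]
  have hae : ∀ᵐ x ∂μ, upperLocalEntropy T μ x ≤ t := by
    have hZae : ∀ᵐ x ∂μ, x ∈ Z := (prob_compl_eq_zero_iff hZ).2 hμZ
    have hall : ∀ᵐ x ∂μ, ∀ m : ℕ, ¬ (x ∈ Z ∧ ∃ᶠ n : ℕ in atTop,
        μ (bowenBall T x n (1 / ((m : ℝ) + 1))) ≤
          ENNReal.ofReal (Real.exp (-(t : ℝ) * n))) :=
      ae_all_iff.2 fun m => by simpa only [ae_iff, not_not] using hnull m
    filter_upwards [hZae, hall] with x hxZ hx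
    refine iSup₂_le fun ε hε => ?_
    by_contra! hlim
    obtain ⟨m, hm⟩ := exists_nat_one_div_lt hε
    refine hx m ⟨hxZ, ?_⟩
    refine ((frequently_lt_of_lt_limsup (by isBoundedDefault) hlim).and_eventually
      (eventually_ge_atTop 1)).mono fun n hn => ?_
    exact (measure_mono (bowenBall_mono T x n hm.le)).trans
      (le_exp_of_lt_negLog_div (measure_ne_top μ _) hn.2 hn.1)
  have hle : upperEntropy T μ ≤ t :=
    (lintegral_mono_ae hae).trans (by simp)
  exact ht.not_ge hle
end
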